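/- arXiv:1503.01588 — 2 statements merged into one kernel-verified Lean document; each statement's English description precedes it below -/
import Mathlib

section
/- There is a universal constant C > 0 such that the following holds: for every n ≥ 2, every nonempty finite message space M, every one-round protocol Π : (Fin n → M) → Bool, every ε ∈ ℝ with 0 < ε < 1, and every t : ℕ, if Π is ε-secure against t strong adaptive corruptions, then (t : ℝ) ≤ C · Real.sqrt n · (1 + Real.log n + Real.log (1/ε)). -/
/-!
The adversary that turns the outcome away from `b` whenever it can fails exactly on
`RobustSet proto b t`. Security therefore makes both robust sets have density at least `ε`, while
any point of one differs from any point of the other in more than `t` coordinates; concentration of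
measure on product spaces forbids this for large `t`.

The concentration used is the bounded differences inequality in the symmetric form
`𝔼 exp f * 𝔼 exp (-f) ≤ ∏ i, cosh (c i)`, where changing coordinate `i` changes `f` by at most
`c i`. It tensorizes: the sections of `f` at two values of the first coordinate have exponential
moments whose ratio is at most `exp (c 0)`, and symmetrizing the product of the two expectations
over pairs of values gains one factor `cosh (c 0)`. Applied to a multiple of the distance to a set
`B`, it gives `Pr A * Pr B ≤ exp (-t ^ 2 / (2 * n))` whenever `A` and `B` are at Hamming distance
at least `t`.
-/

/-- The probability that a uniformly random element of a finite type satisfies `P`. -/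
noncomputable def Pr {α : Type*} [Fintype α] (P : α → Prop) : ℝ :=
  letI := Classical.decPred P
  ((Finset.univ.filter P).card : ℝ) / Fintype.card α

/-- `RobustSet proto b t` is the set of message vectors `r` such that every vector within
Hamming distance `t` of `r` (including `r` itself) yields outcome `b`. -/
def RobustSet {ι M : Type*} [Fintype ι] [DecidableEq M]
    (proto : (ι → M) → Bool) (b : Bool) (t : ℕ) : Set (ι → M) :=
  {r | ∀ r', hammingDist r r' ≤ t → proto r' = b}

/-- `proto` is `ε`-secure against `t` strong adaptive corruptions: for every adversary `A`
changing at most `t` coordinates of the honest messages, every outcome occurs with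
probability at least `ε` over uniform honest messages. -/
def StrongSecure {ι M : Type*} [Fintype ι] [DecidableEq ι] [Fintype M] [DecidableEq M]
    (proto : (ι → M) → Bool) (t : ℕ) (ε : ℝ) : Prop :=
  ∀ A : (ι → M) → (ι → M), (∀ r, hammingDist r (A r) ≤ t) →
    ∀ b : Bool, ε ≤ Pr (fun r => proto (A r) = b)

open Function
open scoped BigOperators

section BoundedDifferences

lemma sq_add_sq_le_two_mul_cosh_mul {a b c : ℝ} (hab : a ≤ Real.exp c * b)
    (hba : b ≤ Real.exp c * a) : a ^ 2 + b ^ 2 ≤ 2 * Real.cosh c * (a * b) := by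
  have factor : 2 * Real.cosh c * (a * b) - (a ^ 2 + b ^ 2)
      = (Real.exp c * b - a) * (Real.exp c * a - b) * Real.exp (-c) := by
    rw [Real.cosh_eq, Real.exp_neg]
    field_simp
    ring
  rw [← sub_nonneg, factor]
  exact mul_nonneg (mul_nonneg (sub_nonneg.2 hab) (sub_nonneg.2 hba)) (Real.exp_nonneg _)

lemma mul_add_mul_le_two_mul_mul_cosh {a a' b b' c K : ℝ} (ha : 0 < a) (ha' : 0 < a')
    (hK : 0 ≤ K) (hab : a * b ≤ K) (hab' : a' * b' ≤ K) (haa' : a ≤ Real.exp c * a')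
    (ha'a : a' ≤ Real.exp c * a) : a * b' + a' * b ≤ 2 * (K * Real.cosh c) := by
  refine le_of_mul_le_mul_left ?_ (mul_pos ha ha')
  calc a * a' * (a * b' + a' * b) = a ^ 2 * (a' * b') + a' ^ 2 * (a * b) := by ring
    _ ≤ a ^ 2 * K + a' ^ 2 * K := by gcongr
    _ = K * (a ^ 2 + a' ^ 2) := by ring
    _ ≤ K * (2 * Real.cosh c * (a * a')) := by
      gcongr
      exact sq_add_sq_le_two_mul_cosh_mul haa' ha'a
    _ = a * a' * (2 * (K * Real.cosh c)) := by ring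

lemma expect_mul_expect_le_mul_cosh {α : Type*} [Fintype α] [Nonempty α] {a b : α → ℝ} {c K : ℝ}
    (ha : ∀ x, 0 < a x) (hK : 0 ≤ K) (hab : ∀ x, a x * b x ≤ K)
    (hratio : ∀ x x', a x ≤ Real.exp c * a x') :
    (𝔼 x, a x) * 𝔼 x, b x ≤ K * Real.cosh c := by
  have symmetrize : 2 * ((𝔼 x, a x) * 𝔼 x, b x) = 𝔼 x, 𝔼 x', (a x * b x' + a x' * b x) := by
    simp only [Finset.expect_add_distrib]
    rw [Finset.expect_comm (f := fun x x' => a x' * b x), ← Fintype.expect_mul_expect, two_mul]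
  have bound : 𝔼 x, 𝔼 x', (a x * b x' + a x' * b x) ≤ 2 * (K * Real.cosh c) :=
    Finset.expect_le Finset.univ_nonempty fun x _ =>
      Finset.expect_le Finset.univ_nonempty fun x' _ =>
        mul_add_mul_le_two_mul_mul_cosh (ha x) (ha x') hK (hab x) (hab x') (hratio x x')
          (hratio x' x)
  linarith

lemma expect_fin_succ_pi {E : Type*} [AddCommMonoid E] [Module ℚ≥0 E] {n : ℕ}
    {α : Fin (n + 1) → Type*} [∀ i, Fintype (α i)] (F : (∀ i, α i) → E) :
    𝔼 r, F r = 𝔼 x : α 0, 𝔼 y : ∀ i : Fin n, α i.succ, F (Fin.cons x y) := by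
  rw [← Finset.expect_product', Finset.univ_product_univ]
  exact (Fintype.expect_equiv (Fin.consEquiv α) _ _ fun _ => rfl).symm

lemma expect_exp_mul_expect_exp_neg_le_prod_cosh_fin {n : ℕ} {α : Fin n → Type*}
    [∀ i, Fintype (α i)] [∀ i, Nonempty (α i)] {f : (∀ i, α i) → ℝ} {c : Fin n → ℝ}
    (hf : ∀ r i x, f (update r i x) ≤ f r + c i) :
    (𝔼 r, Real.exp (f r)) * 𝔼 r, Real.exp (-f r) ≤ ∏ i, Real.cosh (c i) := by
  induction n with
  | zero => simp [← Real.exp_add]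
  | succ n ih =>
    rw [expect_fin_succ_pi, expect_fin_succ_pi, Fin.prod_univ_succ, mul_comm (Real.cosh _)]
    refine expect_mul_expect_le_mul_cosh
      (fun x => Finset.expect_pos (fun y _ => Real.exp_pos _) Finset.univ_nonempty)
      (Finset.prod_nonneg fun i _ => (Real.cosh_pos _).le) (fun x => ?_) (fun x x' => ?_)
    · exact ih fun y i z => by simpa only [Fin.cons_update] using hf (Fin.cons x y) i.succ z
    · rw [Finset.mul_expect]
      refine Finset.expect_le_expect fun y _ => ?_
      rw [← Real.exp_add, Real.exp_le_exp, add_comm]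
      simpa only [Fin.update_cons_zero] using hf (Fin.cons x' y) 0 x

variable {ι : Type*} [Fintype ι] {α : ι → Type*} [∀ i, Fintype (α i)] [∀ i, Nonempty (α i)]

theorem expect_exp_mul_expect_exp_neg_le_prod_cosh [DecidableEq ι] {f : (∀ i, α i) → ℝ}
    {c : ι → ℝ} (hf : ∀ r i x, f (update r i x) ≤ f r + c i) :
    (𝔼 r, Real.exp (f r)) * 𝔼 r, Real.exp (-f r) ≤ ∏ i, Real.cosh (c i) := by
  let e := Fintype.equivFin ι
  let E := e.piCongrLeft' α
  have reindex (F : (∀ i, α i) → ℝ) : 𝔼 r, F r = 𝔼 r, F (E.symm r) :=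
    (Fintype.expect_equiv E.symm _ _ fun _ => rfl).symm
  rw [reindex, reindex, ← Equiv.prod_comp e.symm]
  refine expect_exp_mul_expect_exp_neg_le_prod_cosh_fin fun r j x => ?_
  rw [piCongrLeft'_symm_update]
  exact hf _ _ x

end BoundedDifferences

section Pr

variable {α : Type*} [Fintype α] {P Q : α → Prop}

lemma pr_eq_expect [DecidablePred P] : Pr P = 𝔼 a, if P a then (1 : ℝ) else 0 := by
  rw [Fintype.expect_eq_sum_div_card, Finset.sum_boole]
  unfold Pr
  congr!

lemma pr_nonneg : 0 ≤ Pr P := by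
  unfold Pr
  positivity

lemma pr_mono (h : ∀ a, P a → Q a) : Pr P ≤ Pr Q := by
  classical
  rw [pr_eq_expect, pr_eq_expect]
  refine Finset.expect_le_expect fun a _ => ?_
  by_cases hP : P a
  · simp [hP, h a hP]
  · simp only [hP, if_false]
    positivity

lemma exists_of_pr_pos (h : 0 < Pr P) : ∃ a, P a := by
  classical
  by_contra! hP
  simp [pr_eq_expect, hP] at h

lemma pr_mul_exp_le_expect_exp {f : α → ℝ} {c : ℝ} (h : ∀ a, P a → c ≤ f a) :
    Pr P * Real.exp c ≤ 𝔼 a, Real.exp (f a) := by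
  classical
  rw [pr_eq_expect, Finset.expect_mul]
  refine Finset.expect_le_expect fun a _ => ?_
  by_cases hP : P a
  · simpa [hP] using h a hP
  · simpa [hP] using Real.exp_nonneg (f a)

end Pr

section HammingConcentration

variable {ι : Type*} [Fintype ι] {α : ι → Type*} [∀ i, DecidableEq (α i)]

lemma hammingDist_update_le_one [DecidableEq ι] (r : ∀ i, α i) (i : ι) (x : α i) :
    hammingDist (update r i x) r ≤ 1 := by
  rw [hammingDist, ← Finset.card_singleton i]
  refine Finset.card_le_card fun j hj => ?_
  by_contra hji
  simp_all

lemma infDist_toHamming_update_le [DecidableEq ι] (A : Set (Hamming α)) (r : ∀ i, α i) (i : ι)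
    (x : α i) : Metric.infDist (Hamming.toHamming (update r i x)) A
      ≤ Metric.infDist (Hamming.toHamming r) A + 1 := by
  refine (Metric.infDist_le_infDist_add_dist (y := Hamming.toHamming r)).trans ?_
  rw [Hamming.dist_eq_hammingDist]
  gcongr
  exact_mod_cast hammingDist_update_le_one r i x

variable [DecidableEq ι] [∀ i, Fintype (α i)] [∀ i, Nonempty (α i)] {A B : Set (∀ i, α i)} {t : ℕ}

lemma pr_mul_pr_mul_exp_le_cosh_pow (hAB : ∀ r ∈ A, ∀ s ∈ B, t ≤ hammingDist r s) {l : ℝ}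
    (hl : 0 ≤ l) :
    Pr (· ∈ A) * Pr (· ∈ B) * Real.exp (l * t) ≤ Real.cosh l ^ Fintype.card ι := by
  obtain rfl | hB := B.eq_empty_or_nonempty
  · simpa [pr_eq_expect] using (pow_pos (Real.cosh_pos l) _).le
  let B' : Set (Hamming α) := Hamming.ofHamming ⁻¹' B
  let f : (∀ i, α i) → ℝ := fun r => l * Metric.infDist (Hamming.toHamming r) B'
  have bounded_diff : ∀ r i x, f (update r i x) ≤ f r + l := fun r i x => by
    calc f (update r i x) ≤ l * (_ + 1) :=
          mul_le_mul_of_nonneg_left (infDist_toHamming_update_le _ r i x) hl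
      _ = f r + l := by ring
  have far : ∀ r ∈ A, l * t ≤ f r := fun r hr => by
    refine mul_le_mul_of_nonneg_left ((Metric.le_infDist (s := B') hB).2 fun s hs => ?_) hl
    rw [Hamming.dist_eq_hammingDist]
    exact_mod_cast hAB r hr _ hs
  have near : ∀ r ∈ B, 0 ≤ -f r := fun r hr => by
    have : Metric.infDist (Hamming.toHamming r) B' = 0 := Metric.infDist_zero_of_mem hr
    simp only [f, this, mul_zero, neg_zero, le_refl]
  calc Pr (· ∈ A) * Pr (· ∈ B) * Real.exp (l * t)
      = (Pr (· ∈ A) * Real.exp (l * t)) * (Pr (· ∈ B) * Real.exp 0) := by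
        rw [Real.exp_zero]
        ring
    _ ≤ (𝔼 r, Real.exp (f r)) * 𝔼 r, Real.exp (-f r) :=
        mul_le_mul (pr_mul_exp_le_expect_exp far) (pr_mul_exp_le_expect_exp near)
          (mul_nonneg pr_nonneg (Real.exp_nonneg _))
          (Finset.expect_nonneg fun _ _ => Real.exp_nonneg _)
    _ ≤ ∏ _i : ι, Real.cosh l := expect_exp_mul_expect_exp_neg_le_prod_cosh bounded_diff
    _ = Real.cosh l ^ Fintype.card ι := by rw [Finset.prod_const, Finset.card_univ]

theorem pr_mul_pr_le_exp_neg (hAB : ∀ r ∈ A, ∀ s ∈ B, t ≤ hammingDist r s) :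
    Pr (· ∈ A) * Pr (· ∈ B) ≤ Real.exp (-(t ^ 2 / (2 * Fintype.card ι))) := by
  -- `t / n` minimizes the exponent `n * l ^ 2 / 2 - l * t` over `l`.
  set l : ℝ := t / Fintype.card ι with hl
  have exponent : Fintype.card ι * (l ^ 2 / 2) = -(t ^ 2 / (2 * Fintype.card ι)) + l * t := by
    obtain h | h := eq_or_ne (Fintype.card ι : ℝ) 0
    · simp [hl, h]
    · rw [hl]
      field_simp
      ring
  refine le_of_mul_le_mul_right ?_ (Real.exp_pos (l * t))
  calc Pr (· ∈ A) * Pr (· ∈ B) * Real.exp (l * t)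
      ≤ Real.cosh l ^ Fintype.card ι := pr_mul_pr_mul_exp_le_cosh_pow hAB (by positivity)
    _ ≤ Real.exp (l ^ 2 / 2) ^ Fintype.card ι :=
        pow_le_pow_left₀ (Real.cosh_pos l).le (Real.cosh_le_exp_half_sq l) _
    _ = Real.exp (-(t ^ 2 / (2 * Fintype.card ι))) * Real.exp (l * t) := by
        rw [← Real.exp_nat_mul, exponent, Real.exp_add]

end HammingConcentration

lemma two_mul_sqrt_mul_le {x y z : ℝ} (hx : 0 ≤ x) (hy : 0 ≤ y) (hyz : 1 + y ≤ z) :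
    2 * √(x * y) ≤ √x * z := by
  calc 2 * √(x * y) = √x * (2 * 1 * √y) := by
        rw [Real.sqrt_mul hx]
        ring
    _ ≤ √x * (1 ^ 2 + √y ^ 2) := by
        gcongr
        exact two_mul_le_add_sq 1 √y
    _ = √x * (1 + y) := by rw [one_pow, Real.sq_sqrt hy]
    _ ≤ √x * z := by gcongr

section StrongSecure

variable {ι M : Type*} [Fintype ι] [DecidableEq M] {proto : (ι → M) → Bool} {t : ℕ}

lemma lt_hammingDist_of_mem_robustSet {b b' : Bool} (hb : b ≠ b') {r s : ι → M}
    (hr : r ∈ RobustSet proto b t) (hs : s ∈ RobustSet proto b' t) : t < hammingDist r s := by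
  by_contra! h
  exact hb ((hr s h).symm.trans (hs s (by simp)))

variable [DecidableEq ι] [Fintype M] {ε : ℝ}

lemma StrongSecure.le_pr_robustSet (h : StrongSecure proto t ε) (b : Bool) :
    ε ≤ Pr (· ∈ RobustSet proto b t) := by
  have attack : ∀ r, ∃ r', hammingDist r r' ≤ t ∧ (proto r' = b → r ∈ RobustSet proto b t) :=
    fun r => by
      by_cases hr : r ∈ RobustSet proto b t
      · exact ⟨r, by simp, fun _ => hr⟩
      · obtain ⟨r', hdist, hne⟩ : ∃ r', hammingDist r r' ≤ t ∧ proto r' ≠ b := by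
          simpa [RobustSet] using hr
        exact ⟨r', hdist, fun heq => absurd heq hne⟩
  choose A hdist hA using attack
  exact (h A hdist b).trans (pr_mono hA)

lemma StrongSecure.lt_card (h : StrongSecure proto t ε) (hε : 0 < ε) : t < Fintype.card ι := by
  obtain ⟨r, hr⟩ := exists_of_pr_pos (hε.trans_le (h.le_pr_robustSet true))
  obtain ⟨s, hs⟩ := exists_of_pr_pos (hε.trans_le (h.le_pr_robustSet false))
  exact (lt_hammingDist_of_mem_robustSet (by decide) hr hs).trans_le hammingDist_le_card_fintype

lemma StrongSecure.sq_le_exp_neg [Nonempty M] (h : StrongSecure proto t ε) (hε : 0 < ε) :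
    ε ^ 2 ≤ Real.exp (-(t ^ 2 / (2 * Fintype.card ι))) :=
  calc ε ^ 2 = ε * ε := sq ε
    _ ≤ Pr (· ∈ RobustSet proto true t) * Pr (· ∈ RobustSet proto false t) :=
        mul_le_mul (h.le_pr_robustSet true) (h.le_pr_robustSet false) hε.le pr_nonneg
    _ ≤ Real.exp (-(t ^ 2 / (2 * Fintype.card ι))) :=
        pr_mul_pr_le_exp_neg fun _ hr _ hs =>
          (lt_hammingDist_of_mem_robustSet (by decide) hr hs).le

theorem stmt8_general [Nonempty M] (hε : 0 < ε) (h : StrongSecure proto t ε) :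
    (t : ℝ) ≤ 2 * √(Fintype.card ι * Real.log (1 / ε)) := by
  have card_pos : (0 : ℝ) < Fintype.card ι := by
    exact_mod_cast (Nat.zero_le t).trans_lt (h.lt_card hε)
  have log_le : 2 * Real.log ε ≤ -(t ^ 2 / (2 * Fintype.card ι)) := by
    simpa using (Real.log_le_iff_le_exp (pow_pos hε 2)).2 (h.sq_le_exp_neg hε)
  have sq_le : (t / 2 : ℝ) ^ 2 ≤ Fintype.card ι * Real.log (1 / ε) := by
    calc (t / 2 : ℝ) ^ 2 = Fintype.card ι * (t ^ 2 / (2 * Fintype.card ι) / 2) := by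
          field_simp
      _ ≤ Fintype.card ι * Real.log (1 / ε) := by
          rw [one_div, Real.log_inv]
          gcongr
          linarith
  linarith [Real.le_sqrt_of_sq_le sq_le]

end StrongSecure

/-- (Main theorem, non-asymptotic form.) There is a universal constant
`C > 0` such that any one-round protocol, over any finite message space, that is `ε`-secure
against `t` strong adaptive corruptions satisfies `t ≤ C·√n·(1 + log n + log(1/ε))`. -/
theorem stmt8 : ∃ C : ℝ, 0 < C ∧ ∀ n : ℕ, 2 ≤ n →
    ∀ (M : Type) (_ : Fintype M) (_ : Nonempty M) (_ : DecidableEq M),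
    ∀ proto : (Fin n → M) → Bool, ∀ ε : ℝ, 0 < ε → ε < 1 → ∀ t : ℕ,
      StrongSecure proto t ε →
        (t : ℝ) ≤ C * Real.sqrt n * (1 + Real.log n + Real.log (1 / ε)) := by
  refine ⟨1, one_pos, fun n _ M _ _ _ _ ε hε hε1 t h => ?_⟩
  simpa using (stmt8_general hε h).trans (two_mul_sqrt_mul_le (by positivity)
    (Real.log_nonneg ((one_le_div hε).2 hε1.le))
    (add_le_add_left (le_add_of_nonneg_right (Real.log_natCast_nonneg n)) _))
end

section
/- There exist a constant ε > 0 and N : ℕ such that for every odd n ≥ N, the majority protocol Maj_n : (Fin n → Bool) → Bool, defined by Maj_n r = true if and only if the number of coordinates i with r i = true is greater than n/2, is ε-secure against ⌊Real.sqrt n⌋ strong adaptive corruptions. -/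
/-- The majority protocol: the outcome is `true` iff the number of players sending `true`
exceeds `n/2`. -/
def Maj (n : ℕ) (r : Fin n → Bool) : Bool :=
  decide (n < 2 * (Finset.univ.filter fun i => r i = true).card)

open Finset

lemma Pr_eq_card_div {α : Type*} [Fintype α] (P : α → Prop) [DecidablePred P] :
    Pr P = (#{x | P x} : ℝ) / Fintype.card α := by
  unfold Pr
  congr!

lemma Pr_mono {α : Type*} [Fintype α] {P Q : α → Prop} (h : ∀ x, P x → Q x) : Pr P ≤ Pr Q := by
  classical
  simp only [Pr_eq_card_div]
  gcongr with x
  exact h x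

section HammingBall

variable {ι : Type*} [Fintype ι] [DecidableEq ι]

lemma card_filter_hammingDist_eq (c : ι → Bool) (d : ℕ) :
    #{r | hammingDist c r = d} = (Fintype.card ι).choose d := by
  have hflip (s : Finset ι) : ({i | c i ≠ (c i ^^ decide (i ∈ s))} : Finset ι) = s := by
    ext i
    by_cases hi : i ∈ s <;> simp [hi]
  rw [← card_univ (α := ι), ← card_powersetCard]
  refine card_nbij' (fun r ↦ ({i | c i ≠ r i} : Finset ι)) (fun s i ↦ c i ^^ decide (i ∈ s))
    (fun r hr ↦ ?_) (fun s hs ↦ ?_) (fun r _ ↦ ?_) (fun s _ ↦ hflip s)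
  · simpa [hammingDist, mem_powersetCard] using hr
  · rw [mem_coe, mem_filter_univ, hammingDist, hflip]
    exact (mem_powersetCard.1 hs).2
  · ext i
    cases hc : c i <;> cases hr : r i <;> simp [hc, hr]

lemma card_filter_hammingDist_lt (c : ι → Bool) (k : ℕ) :
    #{r | hammingDist c r < k} = ∑ d ∈ range k, (Fintype.card ι).choose d := by
  rw [card_eq_sum_card_fiberwise (f := hammingDist c) (t := range k) fun r hr ↦ by simpa using hr]
  refine sum_congr rfl fun d hd ↦ ?_
  rw [← card_filter_hammingDist_eq c d, filter_filter]
  congr 1 with r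
  have : hammingDist c r = d → hammingDist c r < k := fun h ↦ h ▸ mem_range.1 hd
  simpa using this

lemma Pr_hammingDist_lt (c : ι → Bool) (k : ℕ) :
    Pr (fun r ↦ hammingDist c r < k) =
      (∑ d ∈ range k, ((Fintype.card ι).choose d : ℝ)) / 2 ^ Fintype.card ι := by
  rw [Pr_eq_card_div, card_filter_hammingDist_lt]
  simp

end HammingBall

section BinomialTail

lemma choose_add_mul_pow_le (n i s : ℕ) :
    n.choose (i + s) * (i + 1) ^ s ≤ n.choose i * (n - i) ^ s := by
  induction s with
  | zero => simp
  | succ s ih =>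
    calc n.choose (i + s + 1) * (i + 1) ^ (s + 1)
        = n.choose (i + s + 1) * (i + 1) * (i + 1) ^ s := by ring
      _ ≤ n.choose (i + s + 1) * (i + s + 1) * (i + 1) ^ s := by gcongr; omega
      _ = n.choose (i + s) * (i + 1) ^ s * (n - (i + s)) := by
        rw [Nat.choose_succ_right_eq]; ring
      _ ≤ n.choose i * (n - i) ^ s * (n - i) := by gcongr; omega
      _ = n.choose i * (n - i) ^ (s + 1) := by ring

variable {n a : ℕ} {ρ : ℝ}

lemma choose_add_le_pow_mul_choose (h : n ≤ a + ρ * (a + 1)) (hρ : 0 ≤ ρ) {i : ℕ} (hi : a ≤ i)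
    (s : ℕ) : (n.choose (i + s) : ℝ) ≤ ρ ^ s * n.choose i := by
  have hai : (a : ℝ) ≤ i := by exact_mod_cast hi
  have hratio : ((n - i : ℕ) : ℝ) ≤ ρ * (i + 1) := by
    rcases le_total n i with hni | hin
    · rw [Nat.sub_eq_zero_of_le hni, Nat.cast_zero]
      positivity
    · have hmono : ρ * (a + 1) ≤ ρ * (i + 1) := by gcongr
      rw [Nat.cast_sub hin]
      linarith
  refine le_of_mul_le_mul_right ?_ (by positivity : (0 : ℝ) < (i + 1) ^ s)
  calc (n.choose (i + s) : ℝ) * (i + 1) ^ s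
      ≤ n.choose i * ((n - i : ℕ) : ℝ) ^ s := by exact_mod_cast choose_add_mul_pow_le n i s
    _ ≤ n.choose i * (ρ * (i + 1)) ^ s := by gcongr
    _ = ρ ^ s * n.choose i * (i + 1) ^ s := by rw [mul_pow]; ring

lemma sum_range_choose_add_le (h : n ≤ a + ρ * (a + 1)) (hρ : 0 ≤ ρ) (s : ℕ) :
    ∑ i ∈ range (a + s + s), (n.choose i : ℝ) ≤
      (1 + ρ ^ s) * ∑ i ∈ range (a + s), (n.choose i : ℝ) := by
  have hwindow : ∑ j ∈ range s, (n.choose (a + s + j) : ℝ) ≤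
      ρ ^ s * ∑ i ∈ range (a + s), (n.choose i : ℝ) := by
    calc ∑ j ∈ range s, (n.choose (a + s + j) : ℝ)
        ≤ ∑ j ∈ range s, ρ ^ s * (n.choose (a + j) : ℝ) := by
          refine sum_le_sum fun j _ ↦ ?_
          rw [add_right_comm]
          exact choose_add_le_pow_mul_choose h hρ (Nat.le_add_right a j) s
      _ = ρ ^ s * ∑ j ∈ range s, (n.choose (a + j) : ℝ) := (mul_sum ..).symm
      _ ≤ ρ ^ s * ∑ i ∈ range (a + s), (n.choose i : ℝ) := by
          rw [sum_range_add (n := a)]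
          gcongr
          exact le_add_of_nonneg_left (by positivity)
  rw [sum_range_add (n := a + s), one_add_mul]
  gcongr

lemma two_pow_le_two_mul_sum_range_choose (n : ℕ) :
    2 ^ n ≤ 2 * ∑ i ∈ range (n / 2 + 1), n.choose i := by
  have hupper : ∑ j ∈ range (n - n / 2), n.choose (n / 2 + 1 + j) ≤
      ∑ i ∈ range (n / 2 + 1), n.choose i := by
    calc ∑ j ∈ range (n - n / 2), n.choose (n / 2 + 1 + j)
        = ∑ j ∈ range (n - n / 2), n.choose j := by
          rw [← sum_range_reflect]
          refine sum_congr rfl fun j hj ↦ ?_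
          have := mem_range.1 hj
          exact Nat.choose_symm_of_eq_add (by omega)
      _ ≤ ∑ i ∈ range (n / 2 + 1), n.choose i :=
          sum_le_sum_of_subset (range_mono (by omega))
  calc 2 ^ n = ∑ i ∈ range (n / 2 + 1 + (n - n / 2)), n.choose i := by
        rw [← Nat.sum_range_choose]; congr 2; omega
    _ ≤ 2 * ∑ i ∈ range (n / 2 + 1), n.choose i := by
        rw [sum_range_add, two_mul]
        gcongr

lemma two_pow_le_exp_mul_sum_range_choose {s : ℕ} (hs : 8 * s ≤ n) :
    (2 : ℝ) ^ n ≤ 2 * (1 + Real.exp (16 * s ^ 2 / n)) *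
      ∑ i ∈ range (n / 2 + 1 - s), (n.choose i : ℝ) := by
  obtain ⟨a, ha⟩ : ∃ a, n / 2 + 1 = a + s + s := ⟨n / 2 + 1 - s - s, by omega⟩
  have hratio : (n : ℝ) ≤ a + (1 + 16 * s / n) * (a + 1) := by
    have ha_lower : (n : ℝ) ≤ 4 * (a + 1) := by norm_cast; omega
    have hn_upper : (n : ℝ) ≤ 2 * a + 4 * s := by norm_cast; omega
    have hexcess : 4 * (s : ℝ) ≤ 16 * s / n * (a + 1) := by
      have hcancel : 16 * (s : ℝ) / n * n = 16 * s :=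
        div_mul_cancel_of_imp fun hn ↦ by
          have : n = 0 := by exact_mod_cast hn
          rw [show s = 0 by omega, Nat.cast_zero, mul_zero]
      have := mul_le_mul_of_nonneg_left ha_lower (by positivity : 0 ≤ 16 * (s : ℝ) / n)
      linarith
    linarith
  have hpow : (1 + 16 * s / n : ℝ) ^ s ≤ Real.exp (16 * s ^ 2 / n) := by
    calc (1 + 16 * s / n : ℝ) ^ s ≤ Real.exp (16 * s / n) ^ s := by
          gcongr
          rw [add_comm]
          exact Real.add_one_le_exp _
      _ = Real.exp (16 * s ^ 2 / n) := by rw [← Real.exp_nat_mul]; congr 1; ring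
  calc (2 : ℝ) ^ n ≤ 2 * ∑ i ∈ range (a + s + s), (n.choose i : ℝ) := by
        rw [← ha]; exact_mod_cast two_pow_le_two_mul_sum_range_choose n
    _ ≤ 2 * ((1 + (1 + 16 * s / n) ^ s) * ∑ i ∈ range (a + s), (n.choose i : ℝ)) := by
        gcongr
        exact sum_range_choose_add_le hratio (by positivity) s
    _ ≤ 2 * ((1 + Real.exp (16 * s ^ 2 / n)) * ∑ i ∈ range (a + s), (n.choose i : ℝ)) := by
        gcongr
    _ = 2 * (1 + Real.exp (16 * s ^ 2 / n)) *
          ∑ i ∈ range (n / 2 + 1 - s), (n.choose i : ℝ) := by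
        rw [ha, Nat.add_sub_cancel, mul_assoc]

end BinomialTail

lemma StrongSecure.of_robustSet {ι M : Type*} [Fintype ι] [DecidableEq ι] [Fintype M]
    [DecidableEq M] {proto : (ι → M) → Bool} {t : ℕ} {ε : ℝ}
    (h : ∀ b, ε ≤ Pr (· ∈ RobustSet proto b t)) : StrongSecure proto t ε :=
  fun A hA b ↦ (h b).trans (Pr_mono fun r hr ↦ hr (A r) (hA r))

section Majority

variable {n t : ℕ} {b : Bool} {r : Fin n → Bool}

lemma maj_eq_of_two_mul_hammingDist_lt (h : 2 * hammingDist (fun _ ↦ b) r < n) :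
    Maj n r = b := by
  have hcard : #{i | r i = true} + #{i | r i = false} = n := by
    simpa using card_filter_add_card_filter_not (s := univ) (r · = true)
  have hdist : hammingDist (fun _ ↦ b) r = #{i | r i = !b} := by
    simp only [hammingDist, Bool.eq_not, ne_comm]
  cases b <;> simp only [Maj, decide_eq_true_eq, decide_eq_false_iff_not, Bool.not_true,
    Bool.not_false] at hdist ⊢ <;> omega

lemma mem_robustSet_maj (h : 2 * (hammingDist (fun _ ↦ b) r + t) < n) :
    r ∈ RobustSet (Maj n) b t := by
  intro r' hr'
  have := hammingDist_triangle (fun _ ↦ b) r r'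
  exact maj_eq_of_two_mul_hammingDist_lt (by omega)

theorem strongSecure_maj (h : 8 * (t + 1) ≤ n) :
    StrongSecure (Maj n) t (1 / (2 * (1 + Real.exp (16 * (t + 1) ^ 2 / n)))) := by
  refine .of_robustSet fun b ↦ ?_
  calc 1 / (2 * (1 + Real.exp (16 * (t + 1) ^ 2 / n)))
      ≤ (∑ i ∈ range (n / 2 - t), (n.choose i : ℝ)) / 2 ^ n := by
        rw [div_le_div_iff₀ (by positivity) (by positivity), one_mul, mul_comm]
        simpa using two_pow_le_exp_mul_sum_range_choose h
    _ = Pr fun r : Fin n → Bool ↦ hammingDist (fun _ ↦ b) r < n / 2 - t := by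
        rw [Pr_hammingDist_lt, Fintype.card_fin]
    _ ≤ Pr (· ∈ RobustSet (Maj n) b t) := Pr_mono fun r hr ↦ mem_robustSet_maj (by omega)

end Majority

theorem stmt15_general (c : ℝ) : ∃ ε : ℝ, 0 < ε ∧ ∃ N : ℕ, ∀ n : ℕ, N ≤ n →
    ∀ t : ℕ, (t : ℝ) ≤ c * √n → StrongSecure (Maj n) t ε := by
  refine ⟨1 / (2 * (1 + Real.exp (16 * (c + 1) ^ 2))), by positivity,
    ⌈(8 * (c + 1)) ^ 2⌉₊ + 1, fun n hn t ht A hA b ↦ ?_⟩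
  have hn_pos : (1 : ℝ) ≤ n := by norm_cast; omega
  have hsqrt : 8 * (c + 1) ≤ √n :=
    Real.le_sqrt_of_sq_le <| Nat.ceil_le.1 (by omega)
  have ht_succ : (t + 1 : ℝ) ≤ (c + 1) * √n := by
    linarith [Real.one_le_sqrt.2 hn_pos]
  have h_large : 8 * (t + 1) ≤ n := by
    have : 8 * (t + 1 : ℝ) ≤ n := by
      calc 8 * (t + 1 : ℝ) ≤ 8 * (c + 1) * √n := by linarith
        _ ≤ √n * √n := by gcongr
        _ = n := Real.mul_self_sqrt n.cast_nonneg
    exact_mod_cast this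
  have h_exponent : (16 * (t + 1) ^ 2 / n : ℝ) ≤ 16 * (c + 1) ^ 2 := by
    rw [div_le_iff₀ (by linarith)]
    calc 16 * (t + 1 : ℝ) ^ 2 ≤ 16 * ((c + 1) * √n) ^ 2 := by gcongr
      _ = 16 * (c + 1) ^ 2 * n := by rw [mul_pow, Real.sq_sqrt n.cast_nonneg, mul_assoc]
  refine le_trans ?_ (strongSecure_maj h_large A hA b)
  gcongr

/-- The majority protocol is `ε`-secure against `⌊√n⌋` strong adaptive
corruptions for some universal constant `ε > 0` and all sufficiently large odd `n`. -/
theorem stmt15 : ∃ ε : ℝ, 0 < ε ∧ ∃ N : ℕ, ∀ n : ℕ, N ≤ n → Odd n →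
    StrongSecure (Maj n) ⌊Real.sqrt n⌋₊ ε := by
  obtain ⟨ε, hε, N, h⟩ := stmt15_general 1
  exact ⟨ε, hε, N, fun n hn _ ↦ h n hn _ (by simpa using Nat.floor_le (Real.sqrt_nonneg n))⟩
end
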